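/- arXiv:math/0002019 — 3 statements merged into one kernel-verified Lean document; each statement's English description precedes it below -/
import Mathlib

section
/- Let A be an m×m nonnegative primitive real matrix with Perron–Frobenius eigenvalue λ. If a vector X ∈ ℝ^m satisfies 0 ≤ λX and λX ≤ AX (entrywise), then AX = λX. -/
/-- Let `A` be an `m × m` nonnegative primitive real matrix with
Perron–Frobenius eigenvalue `lam` (the unique eigenvalue `lam > 0` admitting a right
eigenvector with all entries strictly positive).  If a vector `X ∈ ℝ^m` satisfies
`0 ≤ lam • X` and `lam • X ≤ A.mulVec X` entrywise, then `A.mulVec X = lam • X`. -/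
theorem stmt0 {m : ℕ} (A : Matrix (Fin m) (Fin m) ℝ) (lam : ℝ)
    (hA_nonneg : ∀ i j, 0 ≤ A i j)
    (hA_prim : ∃ l > 0, ∀ i j, 0 < (A ^ l) i j)
    (hlam_pos : 0 < lam)
    (hPF : ∃ v : Fin m → ℝ, (∀ i, 0 < v i) ∧ A.mulVec v = lam • v)
    (X : Fin m → ℝ)
    (h1 : ∀ i, 0 ≤ lam * X i)
    (h2 : ∀ i, lam * X i ≤ A.mulVec X i) :
    A.mulVec X = lam • X := by
  obtain ⟨l, -, hl⟩ := hA_prim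
  obtain ⟨v, hv, hAv⟩ := hPF
  rcases isEmpty_or_nonempty (Fin m) with he | he
  · exact Subsingleton.elim _ _
  obtain ⟨i0, hi0⟩ := Finite.exists_max (fun i => X i / v i)
  obtain ⟨c, hc⟩ : ∃ c, c = X i0 / v i0 := ⟨_, rfl⟩
  obtain ⟨w, hw⟩ : ∃ w : Fin m → ℝ, w = c • v - X := ⟨_, rfl⟩
  have hw0 : ∀ i, 0 ≤ w i := by
    intro i
    have h := (div_le_iff₀ (hv i)).1 (hi0 i)
    simp only [hw, Pi.sub_apply, Pi.smul_apply, smul_eq_mul, hc]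
    linarith
  have hwi0 : w i0 = 0 := by
    have := (hv i0).ne'
    simp only [hw, Pi.sub_apply, Pi.smul_apply, smul_eq_mul, hc]
    field_simp
    ring
  have hAw : ∀ i, A.mulVec w i ≤ lam * w i := by
    intro i
    have h := h2 i
    rw [hw, Matrix.mulVec_sub, Matrix.mulVec_smul, hAv]
    simp only [Pi.sub_apply, Pi.smul_apply, smul_eq_mul]
    linarith
  have hpow : ∀ k : ℕ, ∀ i, (A ^ k).mulVec w i ≤ lam ^ k * w i := by
    intro k
    induction k with
    | zero => intro i; simp
    | succ k ih =>
      intro i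
      rw [pow_succ', ← Matrix.mulVec_mulVec]
      calc A.mulVec ((A ^ k).mulVec w) i ≤ A.mulVec (lam ^ k • w) i := by
            simp only [Matrix.mulVec, dotProduct]
            exact Finset.sum_le_sum fun j _ => mul_le_mul_of_nonneg_left (ih j) (hA_nonneg i j)
        _ = lam ^ k * A.mulVec w i := by rw [Matrix.mulVec_smul]; simp
        _ ≤ lam ^ k * (lam * w i) := mul_le_mul_of_nonneg_left (hAw i) (by positivity)
        _ = lam ^ (k + 1) * w i := by ring
  have hwz : w = 0 := by
    have h := hpow l i0
    rw [hwi0, mul_zero] at h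
    simp only [Matrix.mulVec, dotProduct] at h
    have hnn : ∀ j ∈ Finset.univ, 0 ≤ (A ^ l) i0 j * w j :=
      fun j _ => mul_nonneg (hl i0 j).le (hw0 j)
    have hz := (Finset.sum_eq_zero_iff_of_nonneg hnn).1 (le_antisymm h (Finset.sum_nonneg hnn))
    funext j
    exact (mul_eq_zero.1 (hz j (Finset.mem_univ j))).resolve_left (hl i0 j).ne'
  have hX : X = c • v := by
    rw [hwz] at hw
    exact (sub_eq_zero.1 hw.symm).symm
  rw [hX, Matrix.mulVec_smul, hAv, smul_comm]
end

section
/- Let X ⊆ Y ⊆ L and let (C_i)_{i∈I} be a finite or countable family of pairwise disjoint cosets whose union is the coset part C(X). Then Σ_{i∈I} [L : C_i]⁻¹ ≤ c(Y). In particular, the total index is monotone: c(X) ≤ c(Y). -/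
/-! Cosets `a + Q^k ℤ^n` in the lattice `L = ℤ^n`, the coset part of a subset,
efficient decompositions and the total index, following Lee–Moody,
"Lattice Substitution Systems and Model Sets". -/

/-- The lattice `L = ℤ^n`. -/
abbrev LatZ (n : ℕ) := Fin n → ℤ

/-- `Q` is an inflation of `L = ℤ^n`: `det Q ≠ 0` and `⋂_{k≥0} Q^k L = {0}`. -/
def IsInflation {n : ℕ} (Q : Matrix (Fin n) (Fin n) ℤ) : Prop :=
  Q.det ≠ 0 ∧ (⋂ k : ℕ, Set.range (Q ^ k).mulVec) = {0}

/-- The coset `a + Q^k ℤ^n` in `L = ℤ^n`. -/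
def cosetSet {n : ℕ} (Q : Matrix (Fin n) (Fin n) ℤ) (a : LatZ n) (k : ℕ) :
    Set (LatZ n) :=
  {y | ∃ x, y = a + (Q ^ k).mulVec x}

/-- `C` is a coset in `L = ℤ^n` relative to `Q`, i.e. `C = a + Q^k L` for some
`a ∈ L`, `k ≥ 0`. -/
def IsCoset {n : ℕ} (Q : Matrix (Fin n) (Fin n) ℤ) (C : Set (LatZ n)) : Prop :=
  ∃ a k, C = cosetSet Q a k

/-- The coset part `C(V)` of `V ⊆ L`: the union of all cosets contained in `V`. -/
def cosetPart {n : ℕ} (Q : Matrix (Fin n) (Fin n) ℤ) (V : Set (LatZ n)) :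
    Set (LatZ n) :=
  ⋃₀ {C | IsCoset Q C ∧ C ⊆ V}

/-- The reciprocal `[L : C]⁻¹ = q^{-k}` of the index of a coset `C = a + Q^k L`
(where `q = |det Q|`), as an extended nonnegative real. -/
noncomputable def idxInv {n : ℕ} (Q : Matrix (Fin n) (Fin n) ℤ)
    (C : Set (LatZ n)) : ENNReal :=
  sSup {r | ∃ a k, C = cosetSet Q a k ∧ r = ((Q.det.natAbs : ENNReal) ^ k)⁻¹}

/-- `D` is an efficient decomposition of `V ⊆ L`: a countable collection of pairwise
disjoint cosets, each contained in `V`, whose union is the coset part `C(V)`, and such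
that every coset contained in `V` is contained in some member of `D`. -/
def EffDecomp {n : ℕ} (Q : Matrix (Fin n) (Fin n) ℤ) (V : Set (LatZ n))
    (D : Set (Set (LatZ n))) : Prop :=
  D.Countable ∧ (∀ C ∈ D, IsCoset Q C ∧ C ⊆ V) ∧
    D.Pairwise (fun C C' => Disjoint C C') ∧ ⋃₀ D = cosetPart Q V ∧
    ∀ C', IsCoset Q C' → C' ⊆ V → ∃ C ∈ D, C' ⊆ C

/-- The total index `c(V)` of `V ⊆ L`: the sum of the reciprocals of the indices of
the members of an efficient decomposition of `V` (well-defined, since the efficient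
decomposition is unique). -/
noncomputable def totalIndex {n : ℕ} (Q : Matrix (Fin n) (Fin n) ℤ)
    (V : Set (LatZ n)) : ENNReal :=
  ⨆ D : {D : Set (Set (LatZ n)) // EffDecomp Q V D},
    ∑' C : (D : Set (Set (LatZ n))), idxInv Q (C : Set (LatZ n))

/-- The subgroup `Q^k L`. -/
def latSub {n : ℕ} (Q : Matrix (Fin n) (Fin n) ℤ) (k : ℕ) : AddSubgroup (LatZ n) :=
  (LinearMap.range (Q ^ k).mulVecLin).toAddSubgroup

lemma mem_latSub {n : ℕ} {Q : Matrix (Fin n) (Fin n) ℤ} {k : ℕ} {v : LatZ n} :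
    v ∈ latSub Q k ↔ ∃ x, (Q ^ k).mulVec x = v := by
  simp [latSub]

lemma latSub_le {n : ℕ} (Q : Matrix (Fin n) (Fin n) ℤ) {k m : ℕ} (h : k ≤ m) :
    latSub Q m ≤ latSub Q k := by
  intro v hv
  rw [mem_latSub] at hv ⊢
  obtain ⟨x, rfl⟩ := hv
  refine ⟨(Q ^ (m - k)).mulVec x, ?_⟩
  rw [Matrix.mulVec_mulVec, ← pow_add, Nat.add_sub_cancel' h]

lemma latSub_index {n : ℕ} (Q : Matrix (Fin n) (Fin n) ℤ) (hQ : Q.det ≠ 0) (k : ℕ) :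
    (latSub Q k).index = Q.det.natAbs ^ k := by
  have hdet : (Q ^ k).det ≠ 0 := by rw [Matrix.det_pow]; exact pow_ne_zero _ hQ
  have hinj : Function.Injective (Q ^ k).mulVecLin := by
    intro x y hxy
    have h0 : (Q ^ k).mulVec (x - y) = 0 := by
      rw [Matrix.mulVec_sub, sub_eq_zero]; exact hxy
    exact sub_eq_zero.mp (Matrix.eq_zero_of_mulVec_eq_zero hdet h0)
  have h := Submodule.natAbs_det_equiv (LinearMap.range (Q ^ k).mulVecLin)
    (LinearEquiv.ofInjective (Q ^ k).mulVecLin hinj)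
  have e : (LinearMap.range (Q ^ k).mulVecLin).subtype ∘ₗ
      AddMonoidHom.toIntLinearMap
        ((LinearEquiv.ofInjective (Q ^ k).mulVecLin hinj : _ →+ _)) =
      Matrix.toLin' (Q ^ k) := by
    rw [Matrix.toLin'_apply']
    rfl
  have h2 : (latSub Q k).index = ((Q ^ k).det).natAbs := by
    rw [← LinearMap.det_toLin', ← e]
    exact h.symm
  rw [h2, Matrix.det_pow, Int.natAbs_pow]

lemma mem_cosetSet {n : ℕ} {Q : Matrix (Fin n) (Fin n) ℤ} {a : LatZ n} {k : ℕ} {y : LatZ n} :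
    y ∈ cosetSet Q a k ↔ y - a ∈ latSub Q k := by
  rw [mem_latSub]
  constructor
  · rintro ⟨x, rfl⟩
    exact ⟨x, by simp⟩
  · rintro ⟨x, hx⟩
    exact ⟨x, by rw [hx]; abel⟩

lemma self_mem_cosetSet {n : ℕ} (Q : Matrix (Fin n) (Fin n) ℤ) (a : LatZ n) (k : ℕ) :
    a ∈ cosetSet Q a k := by
  rw [mem_cosetSet, sub_self]; exact zero_mem _

lemma cosetSet_eq {n : ℕ} {Q : Matrix (Fin n) (Fin n) ℤ} {a y : LatZ n} {k : ℕ}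
    (h : y ∈ cosetSet Q a k) : cosetSet Q a k = cosetSet Q y k := by
  rw [mem_cosetSet] at h
  ext z
  rw [mem_cosetSet, mem_cosetSet]
  constructor
  · intro hz
    have := sub_mem hz h
    simpa using this
  · intro hz
    have := add_mem hz h
    simpa using this

lemma cosetSet_anti {n : ℕ} (Q : Matrix (Fin n) (Fin n) ℤ) (a : LatZ n) {k m : ℕ}
    (h : k ≤ m) : cosetSet Q a m ⊆ cosetSet Q a k := by
  intro z hz
  rw [mem_cosetSet] at hz ⊢
  exact latSub_le Q h hz

/-- Image of a set in the quotient `L / Q^N L`. -/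
def qim {n : ℕ} (Q : Matrix (Fin n) (Fin n) ℤ) (N : ℕ) (S : Set (LatZ n)) :
    Set (LatZ n ⧸ latSub Q N) := (QuotientAddGroup.mk' (latSub Q N)) '' S

lemma qim_card {n : ℕ} (Q : Matrix (Fin n) (Fin n) ℤ) (hQ : Q.det ≠ 0) (a : LatZ n)
    {k N : ℕ} (h : k ≤ N) :
    (qim Q N (cosetSet Q a k)).ncard * Q.det.natAbs ^ k = Q.det.natAbs ^ N := by
  set f := QuotientAddGroup.mk' (latSub Q N) with hf
  have h1 : qim Q N (cosetSet Q a k) =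
      (fun x => f a + x) '' (((latSub Q k).map f : AddSubgroup _) : Set _) := by
    ext z
    constructor
    · rintro ⟨y, hy, rfl⟩
      rw [mem_cosetSet] at hy
      exact ⟨f (y - a), ⟨_, hy, rfl⟩, by simp [hf]⟩
    · rintro ⟨w, ⟨v, hv, rfl⟩, rfl⟩
      refine ⟨a + v, ?_, by simp [hf]⟩
      rw [mem_cosetSet]; simpa using hv
  rw [h1, Set.ncard_image_of_injective _ (add_right_injective _)]
  have h2 := AddSubgroup.card_mul_index ((latSub Q k).map f)
  rw [AddSubgroup.index_map_eq _ (QuotientAddGroup.mk'_surjective _)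
    (by rw [QuotientAddGroup.ker_mk']; exact latSub_le Q h), latSub_index Q hQ] at h2
  have h3 : Nat.card (LatZ n ⧸ latSub Q N) = Q.det.natAbs ^ N := latSub_index Q hQ N
  rw [h3] at h2
  exact h2

lemma idxInv_eq {n : ℕ} (Q : Matrix (Fin n) (Fin n) ℤ) (hQ : Q.det ≠ 0) (a : LatZ n)
    (k : ℕ) : idxInv Q (cosetSet Q a k) = ((Q.det.natAbs : ENNReal) ^ k)⁻¹ := by
  have hq : 0 < Q.det.natAbs := Int.natAbs_pos.mpr hQ
  have : {r | ∃ b j, cosetSet Q a k = cosetSet Q b j ∧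
      r = ((Q.det.natAbs : ENNReal) ^ j)⁻¹} = {((Q.det.natAbs : ENNReal) ^ k)⁻¹} := by
    ext r
    simp only [Set.mem_ofPred_eq, Set.mem_singleton_iff]
    constructor
    · rintro ⟨b, j, hE, rfl⟩
      have h1 := qim_card Q hQ a (le_max_left k j)
      have h2 := qim_card Q hQ b (le_max_right k j)
      rw [hE, ← h2] at h1
      have h4 : 0 < Q.det.natAbs ^ (max k j) := pow_pos hq _
      rw [← h2] at h4
      have h5 := Nat.eq_of_mul_eq_mul_left (Nat.pos_of_mul_pos_right h4) h1
      congr 1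
      exact_mod_cast h5.symm
    · rintro rfl
      exact ⟨a, k, rfl, rfl⟩
  rw [idxInv, this, sSup_singleton]

lemma idxInv_eq_ncard {n : ℕ} (Q : Matrix (Fin n) (Fin n) ℤ) (hQ : Q.det ≠ 0) (a : LatZ n)
    {k N : ℕ} (h : k ≤ N) : idxInv Q (cosetSet Q a k) =
      ((qim Q N (cosetSet Q a k)).ncard : ENNReal) * ((Q.det.natAbs : ENNReal) ^ N)⁻¹ := by
  have hq : (Q.det.natAbs : ENNReal) ≠ 0 := by simpa using hQ
  have hc := qim_card Q hQ a h
  have hc' : ((qim Q N (cosetSet Q a k)).ncard : ENNReal) * (Q.det.natAbs : ENNReal) ^ k =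
    (Q.det.natAbs : ENNReal) ^ N := by exact_mod_cast hc
  have hk0 : (Q.det.natAbs : ENNReal) ^ k ≠ 0 := pow_ne_zero _ hq
  have hkt : (Q.det.natAbs : ENNReal) ^ k ≠ ⊤ := ENNReal.pow_ne_top (ENNReal.natCast_ne_top _)
  have hN0 : (Q.det.natAbs : ENNReal) ^ N ≠ 0 := pow_ne_zero _ hq
  have hNt : (Q.det.natAbs : ENNReal) ^ N ≠ ⊤ := ENNReal.pow_ne_top (ENNReal.natCast_ne_top _)
  rw [idxInv_eq Q hQ]
  symm
  apply ENNReal.eq_inv_of_mul_eq_one_left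
  rw [mul_right_comm, hc', ENNReal.mul_inv_cancel hN0 hNt]

lemma qim_disjoint {n : ℕ} (Q : Matrix (Fin n) (Fin n) ℤ) (a : LatZ n) {k N : ℕ} (h : k ≤ N)
    {S : Set (LatZ n)} (hd : Disjoint (cosetSet Q a k) S) :
    Disjoint (qim Q N (cosetSet Q a k)) (qim Q N S) := by
  rw [Set.disjoint_left] at hd ⊢
  rintro _ ⟨x, hx, rfl⟩ ⟨y, hy, hxy⟩
  apply hd _ hy
  have h1 : -x + y ∈ latSub Q N := QuotientAddGroup.eq.mp hxy.symm
  rw [mem_cosetSet] at hx ⊢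
  have := add_mem hx (latSub_le Q h h1)
  convert this using 1
  abel

lemma exists_eff {n : ℕ} (Q : Matrix (Fin n) (Fin n) ℤ) (Y : Set (LatZ n)) :
    ∃ D, EffDecomp Q Y D := by
  have hmax : ∀ C', IsCoset Q C' → C' ⊆ Y → ∃ a k, C' ⊆ cosetSet Q a k ∧
      cosetSet Q a k ⊆ Y ∧ ∀ j, cosetSet Q a j ⊆ Y → k ≤ j := by
    classical
    rintro _ ⟨a, k, rfl⟩ hk
    have hex : ∃ k, cosetSet Q a k ⊆ Y := ⟨k, hk⟩
    exact ⟨a, Nat.find hex, cosetSet_anti Q a (Nat.find_min' hex hk), Nat.find_spec hex,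
      fun j hj => Nat.find_min' hex hj⟩
  refine ⟨{C | ∃ a k, C = cosetSet Q a k ∧ C ⊆ Y ∧ ∀ j, cosetSet Q a j ⊆ Y → k ≤ j},
    ?_, ?_, ?_, ?_, ?_⟩
  · apply (Set.countable_range (fun p : LatZ n × ℕ => cosetSet Q p.1 p.2)).mono
    rintro _ ⟨a, k, rfl, -⟩
    exact ⟨(a, k), rfl⟩
  · rintro _ ⟨a, k, rfl, h, -⟩
    exact ⟨⟨a, k, rfl⟩, h⟩
  · rintro _ ⟨a, k, rfl, hk, mk⟩ _ ⟨b, j, rfl, hj, mj⟩ hne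
    by_contra hnd
    obtain ⟨y, hya, hyb⟩ := Set.not_disjoint_iff.mp hnd
    apply hne
    have hkj : k = j := by
      rcases le_total k j with hle | hle
      · refine le_antisymm hle (mj k ?_)
        rw [cosetSet_eq (cosetSet_anti Q b hle hyb), ← cosetSet_eq hya]
        exact hk
      · refine le_antisymm (mk j ?_) hle
        rw [cosetSet_eq (cosetSet_anti Q a hle hya), ← cosetSet_eq hyb]
        exact hj
    subst hkj
    rw [cosetSet_eq hya, ← cosetSet_eq hyb]
  · apply subset_antisymm
    · rintro y ⟨_, ⟨a, k, rfl, h, -⟩, hy⟩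
      exact ⟨_, ⟨⟨a, k, rfl⟩, h⟩, hy⟩
    · rintro y ⟨C', ⟨hC, hY⟩, hy⟩
      obtain ⟨a, k, h1, h2, h3⟩ := hmax C' hC hY
      exact ⟨_, ⟨a, k, rfl, h2, h3⟩, h1 hy⟩
  · intro C' hC hY
    obtain ⟨a, k, h1, h2, h3⟩ := hmax C' hC hY
    exact ⟨_, ⟨a, k, rfl, h2, h3⟩, h1⟩

lemma sum_le_main {n : ℕ} (Q : Matrix (Fin n) (Fin n) ℤ) (hQ : Q.det ≠ 0)
    (Y : Set (LatZ n)) {I : Type} (C : I → Set (LatZ n))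
    (hcoset : ∀ i, IsCoset Q (C i))
    (hdisj : Pairwise (Function.onFun Disjoint C))
    (hY : ∀ i, C i ⊆ Y) :
    ∑' i, idxInv Q (C i) ≤ totalIndex Q Y := by
  classical
  obtain ⟨D, hD⟩ := exists_eff Q Y
  have hle : ∑' E : D, idxInv Q (E : Set (LatZ n)) ≤ totalIndex Q Y :=
    le_iSup (fun D : {D : Set (Set (LatZ n)) // EffDecomp Q Y D} =>
      ∑' C : (D : Set (Set (LatZ n))), idxInv Q (C : Set (LatZ n))) ⟨D, hD⟩
  refine le_trans ?_ hle
  obtain ⟨-, hDc, hDd, -, hDm⟩ := hD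
  choose a k hak using hcoset
  have hg : ∀ i, ∃ E : D, C i ⊆ E := fun i => by
    obtain ⟨E, hE, h⟩ := hDm (C i) ⟨a i, k i, hak i⟩ (hY i)
    exact ⟨⟨E, hE⟩, h⟩
  choose g hg using hg
  have hb : ∀ E : D, ∃ b j, (E : Set (LatZ n)) = cosetSet Q b j := fun E => (hDc E E.2).1
  choose b j hbj using hb
  rw [ENNReal.tsum_eq_iSup_sum]
  refine iSup_le fun s => ?_
  refine le_trans ?_ (ENNReal.sum_le_tsum (s.image g))
  set N := s.sup k + (s.image g).sup j with hN
  have hkN : ∀ i ∈ s, k i ≤ N := fun i hi => (Finset.le_sup hi).trans (Nat.le_add_right _ _)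
  have hjN : ∀ E ∈ s.image g, j E ≤ N :=
    fun E hE => (Finset.le_sup hE).trans (Nat.le_add_left _ _)
  have hfin : Finite (LatZ n ⧸ latSub Q N) := by
    apply Nat.finite_of_card_ne_zero
    have h3 : Nat.card (LatZ n ⧸ latSub Q N) = Q.det.natAbs ^ N := latSub_index Q hQ N
    rw [h3]
    exact pow_ne_zero _ (Int.natAbs_ne_zero.mpr hQ)
  have := Fintype.ofFinite (LatZ n ⧸ latSub Q N)
  have e1 : ∑ i ∈ s, idxInv Q (C i) =
      (((s.biUnion fun i => (qim Q N (C i)).toFinset).card : ℕ) : ENNReal) *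
        ((Q.det.natAbs : ENNReal) ^ N)⁻¹ := by
    rw [Finset.card_biUnion, Nat.cast_sum, Finset.sum_mul]
    · refine Finset.sum_congr rfl fun i hi => ?_
      rw [← Set.ncard_eq_toFinset_card', hak i]
      exact idxInv_eq_ncard Q hQ (a i) (hkN i hi)
    · intro i hi i' hi' hne
      rw [Function.onFun, Set.disjoint_toFinset]
      have hd : Disjoint (C i) (C i') := hdisj hne
      rw [hak i] at hd ⊢
      exact qim_disjoint Q (a i) (hkN i hi) hd
  have e2 : ∑ E ∈ s.image g, idxInv Q (E : Set (LatZ n)) =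
      ((((s.image g).biUnion fun E => (qim Q N (E : Set (LatZ n))).toFinset).card : ℕ) :
        ENNReal) * ((Q.det.natAbs : ENNReal) ^ N)⁻¹ := by
    rw [Finset.card_biUnion, Nat.cast_sum, Finset.sum_mul]
    · refine Finset.sum_congr rfl fun E hE => ?_
      rw [← Set.ncard_eq_toFinset_card', hbj E]
      exact idxInv_eq_ncard Q hQ (b E) (hjN E hE)
    · intro E hE E' hE' hne
      rw [Function.onFun, Set.disjoint_toFinset]
      have hd : Disjoint (E : Set (LatZ n)) (E' : Set (LatZ n)) :=
        hDd E.2 E'.2 (fun h => hne (Subtype.ext h))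
      rw [hbj E] at hd ⊢
      exact qim_disjoint Q (b E) (hjN E hE) hd
  rw [e1, e2]
  gcongr
  intro z hz
  simp only [Finset.mem_biUnion, Set.mem_toFinset] at hz ⊢
  obtain ⟨i, hi, hz⟩ := hz
  exact ⟨g i, Finset.mem_image_of_mem g hi, Set.image_mono (hg i) hz⟩

/-- Let `X ⊆ Y ⊆ L = ℤ^n` and let `(Cᵢ)_{i ∈ I}` be a finite or
countable family of pairwise disjoint cosets whose union is the coset part `C(X)`.
Then `∑_{i ∈ I} [L : Cᵢ]⁻¹ ≤ c(Y)`.  In particular, the total index is monotone: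
`c(X) ≤ c(Y)`. -/
theorem stmt15 {n : ℕ} (Q : Matrix (Fin n) (Fin n) ℤ) (hQ : IsInflation Q)
    (X Y : Set (LatZ n)) (hXY : X ⊆ Y)
    {I : Type} [Countable I] (C : I → Set (LatZ n))
    (hcoset : ∀ i, IsCoset Q (C i))
    (hdisj : Pairwise (Function.onFun Disjoint C))
    (hunion : ⋃ i, C i = cosetPart Q X) :
    (∑' i, idxInv Q (C i) ≤ totalIndex Q Y) ∧ totalIndex Q X ≤ totalIndex Q Y := by
  have hpart : ∀ V : Set (LatZ n), cosetPart Q V ⊆ V := by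
    rintro V y ⟨C', ⟨-, hV⟩, hy⟩
    exact hV hy
  refine ⟨sum_le_main Q hQ.1 Y C hcoset hdisj fun i => ?_, iSup_le ?_⟩
  · exact (Set.subset_iUnion C i).trans (hunion.subset.trans ((hpart X).trans hXY))
  · rintro ⟨D, -, hDc, hDd, -, -⟩
    refine sum_le_main Q hQ.1 Y (fun E : D => (E : Set (LatZ n))) (fun E => (hDc E E.2).1) ?_
      (fun E => (hDc E E.2).2.trans hXY)
    intro E E' hne
    exact hDd E.2 E'.2 (fun h => hne (Subtype.ext h))
end

section
/- In ℤ², define e₁=(0,0), e₂=(1,0), e₃=(1,1), e₄=(0,1), the maps h_i : x ↦ 2x + e_i (i=1,…,4), and the 4×4 matrix function system Φ with rows Φ₁=({h₁,h₃},{h₁},∅,{h₁}), Φ₂=({h₂},{h₂,h₄},{h₂},∅), Φ₃=(∅,{h₃},{h₃,h₁},{h₃}), Φ₄=({h₄},∅,{h₄},{h₄,h₂}). Define U₁ := ⋃_{k≥0}⋃_{t=0}^{2^k−1}(2^k(2,0)+t(1,1)+2^k·4ℤ²) ∪ ⋃_{k≥0}⋃_{t=0}^{2^k−1}(2^k(0,2)+t(1,1)+2^k·4ℤ²)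 ∪ {t(1,1) : t ∈ ℤ}; U₂ := ⋃_{k≥0}⋃_{t=0}^{2^k−1}((−1,0)+2^k(2,0)+t(−1,1)+2^k·4ℤ²) ∪ ⋃_{k≥0}⋃_{t=0}^{2^k−1}((−1,0)+2^k(0,2)+t(−1,1)+2^k·4ℤ²) ∪ {(0,−1)+t(1,−1) : t ≥ 0}; U₃ := ⋃_{k≥0}⋃_{t=0}^{2^k−1}((−1,−1)+2^k(2,0)+t(−1,−1)+2^k·4ℤ²) ∪ ⋃_{k≥0}⋃_{t=0}^{2^k−1}((−1,−1)+2^k(0,2)+t(−1,−1)+2^k·4ℤ²); U₄ := ⋃_{k≥0}⋃_{t=0}^{2^k−1}((0,−1)+2^k(2,0)+t(1,−1)+2^k·4ℤ²) ∪ ⋃_{k≥0}⋃_{t=0}^{2^k−1}((0,−1)+2^k(0,2)+t(1,−1)+2^k·4ℤ²) ∪ {(−1,0)+t(−1,1) : t ≥ 0}. Then U₁, U₂, U₃, U₄ are pairwise disjoint, U₁ ∪ U₂ ∪ U₃ ∪ U₄ = ℤ², and for each i = 1,…,4, U_i = ⋃_{j=1}^4 ⋃_{f ∈ Φ_{ij}}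 f(U_j). -/
/-! The 2-dimensional chair tiling substitution on the lattice `ℤ²` (here `ℤ × ℤ`),
following Lee–Moody, "Lattice Substitution Systems and Model Sets". -/

/-- The basic orientation vectors `e₁ = (0,0)`, `e₂ = (1,0)`, `e₃ = (1,1)`,
`e₄ = (0,1)` (indexed here by `Fin 4` as `e 0, e 1, e 2, e 3`). -/
def chairE : Fin 4 → ℤ × ℤ
  | 0 => (0, 0)
  | 1 => (1, 0)
  | 2 => (1, 1)
  | 3 => (0, 1)

/-- The affine inflation maps `hᵢ : x ↦ 2x + eᵢ` on `ℤ²`. -/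
def chairH (i : Fin 4) : ℤ × ℤ → ℤ × ℤ :=
  fun x => (2 : ℤ) • x + chairE i

/-- The set `⋃_{k ≥ 0} ⋃_{t = 0}^{2^k - 1} (a + 2^k g + t d + 2^k · 4 ℤ²)`,
a building block of the chair point sets (`a` a base point, `g` a generating vector,
`d` a diagonal direction). -/
def chairPart (a d g : ℤ × ℤ) : Set (ℤ × ℤ) :=
  ⋃ (k : ℕ), ⋃ (t : ℕ), ⋃ (_ : t < 2 ^ k),
    {p | ∃ v : ℤ × ℤ, p = a + ((2 : ℤ) ^ k) • g + (t : ℤ) • d + ((2 : ℤ) ^ k * 4) • v}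

/-- The four chair point sets `U₁, U₂, U₃, U₄` (indexed here by `Fin 4` as
`U 0, …, U 3`):
`U₁ = ⋃_{k,t} (2^k(2,0) + t(1,1) + 2^k·4ℤ²) ∪ ⋃_{k,t} (2^k(0,2) + t(1,1) + 2^k·4ℤ²)
      ∪ {t(1,1) : t ∈ ℤ}`,
`U₂ = ⋃_{k,t} ((-1,0) + 2^k(2,0) + t(-1,1) + 2^k·4ℤ²)
      ∪ ⋃_{k,t} ((-1,0) + 2^k(0,2) + t(-1,1) + 2^k·4ℤ²)
      ∪ {(0,-1) + t(1,-1) : t ≥ 0}`,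
`U₃ = ⋃_{k,t} ((-1,-1) + 2^k(2,0) + t(-1,-1) + 2^k·4ℤ²)
      ∪ ⋃_{k,t} ((-1,-1) + 2^k(0,2) + t(-1,-1) + 2^k·4ℤ²)`,
`U₄ = ⋃_{k,t} ((0,-1) + 2^k(2,0) + t(1,-1) + 2^k·4ℤ²)
      ∪ ⋃_{k,t} ((0,-1) + 2^k(0,2) + t(1,-1) + 2^k·4ℤ²)
      ∪ {(-1,0) + t(-1,1) : t ≥ 0}`,
where in each case `t` ranges over `0 ≤ t < 2^k`. -/
def chairU : Fin 4 → Set (ℤ × ℤ)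
  | 0 => chairPart (0, 0) (1, 1) (2, 0) ∪ chairPart (0, 0) (1, 1) (0, 2) ∪
      {p | ∃ t : ℤ, p = t • ((1, 1) : ℤ × ℤ)}
  | 1 => chairPart (-1, 0) (-1, 1) (2, 0) ∪ chairPart (-1, 0) (-1, 1) (0, 2) ∪
      {p | ∃ t : ℕ, p = ((0, -1) : ℤ × ℤ) + (t : ℤ) • ((1, -1) : ℤ × ℤ)}
  | 2 => chairPart (-1, -1) (-1, -1) (2, 0) ∪ chairPart (-1, -1) (-1, -1) (0, 2)
  | 3 => chairPart (0, -1) (1, -1) (2, 0) ∪ chairPart (0, -1) (1, -1) (0, 2) ∪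
      {p | ∃ t : ℕ, p = ((-1, 0) : ℤ × ℤ) + (t : ℤ) • ((-1, 1) : ℤ × ℤ)}

/-- `d` has 2-adic valuation `k + 1` and bit `k` of `x` equals zero. -/
def ChB0 (d x : ℤ) : Prop :=
  ∃ (k : ℕ) (a b : ℤ) (t : ℕ), t < 2 ^ k ∧ d = 2 ^ k * 2 + 2 ^ k * 4 * a ∧ x = 2 ^ k * (2 * b) + t

/-- `d` has 2-adic valuation `k + 1` and bit `k` of `x` equals one. -/
def ChB1 (d x : ℤ) : Prop :=
  ∃ (k : ℕ) (a b : ℤ) (t : ℕ), t < 2 ^ k ∧ d = 2 ^ k * 2 + 2 ^ k * 4 * a ∧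
    x = 2 ^ k * (2 * b + 1) + t

theorem mem_chairPart (a1 a2 d1 d2 g1 g2 x y : ℤ) :
    (x, y) ∈ chairPart (a1, a2) (d1, d2) (g1, g2) ↔ ∃ (k t : ℕ), t < 2 ^ k ∧ ∃ v w : ℤ,
      x = a1 + 2 ^ k * g1 + t * d1 + 2 ^ k * 4 * v ∧
      y = a2 + 2 ^ k * g2 + t * d2 + 2 ^ k * 4 * w := by
  simp only [chairPart, Set.mem_iUnion, Set.mem_ofPred_eq, Prod.exists, Prod.smul_mk, Prod.mk_add_mk,
    Prod.mk.injEq, smul_eq_mul, exists_prop]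

theorem refl_t (k t : ℕ) (h : t < 2 ^ k) : ∃ s : ℕ, s < 2 ^ k ∧ (s : ℤ) = 2 ^ k - 1 - t := by
  refine ⟨2 ^ k - 1 - t, by omega, ?_⟩
  have : ((2 ^ k - 1 - t : ℕ) : ℤ) + 1 + t = ((2 ^ k : ℕ) : ℤ) := by
    exact_mod_cast (by omega : 2 ^ k - 1 - t + 1 + t = 2 ^ k)
  push_cast at this
  linarith

theorem mem_U0 (x y : ℤ) : (x, y) ∈ chairU 0 ↔ ChB0 (y - x) x ∨ y = x := by
  have h : (x, y) ∈ chairU 0 ↔ ((x, y) ∈ chairPart (0, 0) (1, 1) (2, 0) ∨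
      (x, y) ∈ chairPart (0, 0) (1, 1) (0, 2)) ∨ y = x := by
    simp only [chairU, Set.mem_union, Set.mem_ofPred_eq]
    apply or_congr Iff.rfl
    constructor
    · rintro ⟨t, ht⟩
      simp at ht
      omega
    · rintro rfl
      exact ⟨y, by simp⟩
  rw [h, mem_chairPart, mem_chairPart]
  apply or_congr _ Iff.rfl
  constructor
  · rintro (⟨k, t, ht, v, w, hx, hy⟩ | ⟨k, t, ht, v, w, hx, hy⟩)
    · exact ⟨k, w - v - 1, 2 * v + 1, t, ht, by linear_combination hy - hx, by linear_combination hx⟩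
    · exact ⟨k, w - v, 2 * v, t, ht, by linear_combination hy - hx, by linear_combination hx⟩
  · rintro ⟨k, a, b, t, ht, hd, hx⟩
    rcases Int.even_or_odd' b with ⟨c, rfl | rfl⟩
    · exact Or.inr ⟨k, t, ht, c, c + a, by linear_combination hx, by linear_combination hx + hd⟩
    · exact Or.inl ⟨k, t, ht, c, c + a + 1, by linear_combination hx, by linear_combination hx + hd⟩

theorem mem_U1 (x y : ℤ) :
    (x, y) ∈ chairU 1 ↔ ChB1 (x + y + 1) x ∨ (x + y + 1 = 0 ∧ 0 ≤ x) := by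
  have h : (x, y) ∈ chairU 1 ↔ ((x, y) ∈ chairPart (-1, 0) (-1, 1) (2, 0) ∨
      (x, y) ∈ chairPart (-1, 0) (-1, 1) (0, 2)) ∨ (x + y + 1 = 0 ∧ 0 ≤ x) := by
    simp only [chairU, Set.mem_union, Set.mem_ofPred_eq]
    apply or_congr Iff.rfl
    constructor
    · rintro ⟨t, ht⟩
      simp at ht
      omega
    · rintro ⟨h1, h2⟩
      refine ⟨x.toNat, ?_⟩
      simp
      omega
  rw [h, mem_chairPart, mem_chairPart]
  apply or_congr _ Iff.rfl
  constructor
  · rintro (⟨k, t, ht, v, w, hx, hy⟩ | ⟨k, t, ht, v, w, hx, hy⟩) <;>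
      obtain ⟨s, hs, hst⟩ := refl_t k t ht
    · exact ⟨k, v + w, 2 * v, s, hs, by linear_combination hx + hy, by linear_combination hx - hst⟩
    · exact ⟨k, v + w, 2 * v - 1, s, hs, by linear_combination hx + hy,
        by linear_combination hx - hst⟩
  · rintro ⟨k, a, b, t, ht, hd, hx⟩
    obtain ⟨s, hs, hst⟩ := refl_t k t ht
    rcases Int.even_or_odd' b with ⟨c, rfl | rfl⟩
    · exact Or.inl ⟨k, s, hs, c, a - c, by linear_combination hx + hst,
        by linear_combination hd - hx - hst⟩
    · exact Or.inr ⟨k, s, hs, c + 1, a - c - 1, by linear_combination hx + hst,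
        by linear_combination hd - hx - hst⟩

theorem mem_U2 (x y : ℤ) : (x, y) ∈ chairU 2 ↔ ChB1 (y - x) x := by
  have h : (x, y) ∈ chairU 2 ↔ ((x, y) ∈ chairPart (-1, -1) (-1, -1) (2, 0) ∨
      (x, y) ∈ chairPart (-1, -1) (-1, -1) (0, 2)) := by
    simp only [chairU, Set.mem_union]
  rw [h, mem_chairPart, mem_chairPart]
  constructor
  · rintro (⟨k, t, ht, v, w, hx, hy⟩ | ⟨k, t, ht, v, w, hx, hy⟩) <;>
      obtain ⟨s, hs, hst⟩ := refl_t k t ht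
    · exact ⟨k, w - v - 1, 2 * v, s, hs, by linear_combination hy - hx,
        by linear_combination hx - hst⟩
    · exact ⟨k, w - v, 2 * v - 1, s, hs, by linear_combination hy - hx,
        by linear_combination hx - hst⟩
  · rintro ⟨k, a, b, t, ht, hd, hx⟩
    obtain ⟨s, hs, hst⟩ := refl_t k t ht
    rcases Int.even_or_odd' b with ⟨c, rfl | rfl⟩
    · exact Or.inl ⟨k, s, hs, c, a + c + 1, by linear_combination hx + hst,
        by linear_combination hd + hx + hst⟩
    · exact Or.inr ⟨k, s, hs, c + 1, a + c + 1, by linear_combination hx + hst,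
        by linear_combination hd + hx + hst⟩

theorem mem_U3 (x y : ℤ) :
    (x, y) ∈ chairU 3 ↔ ChB0 (x + y + 1) x ∨ (x + y + 1 = 0 ∧ x < 0) := by
  have h : (x, y) ∈ chairU 3 ↔ ((x, y) ∈ chairPart (0, -1) (1, -1) (2, 0) ∨
      (x, y) ∈ chairPart (0, -1) (1, -1) (0, 2)) ∨ (x + y + 1 = 0 ∧ x < 0) := by
    simp only [chairU, Set.mem_union, Set.mem_ofPred_eq]
    apply or_congr Iff.rfl
    constructor
    · rintro ⟨t, ht⟩
      simp at ht
      omega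
    · rintro ⟨h1, h2⟩
      refine ⟨y.toNat, ?_⟩
      simp
      omega
  rw [h, mem_chairPart, mem_chairPart]
  apply or_congr _ Iff.rfl
  constructor
  · rintro (⟨k, t, ht, v, w, hx, hy⟩ | ⟨k, t, ht, v, w, hx, hy⟩)
    · exact ⟨k, v + w, 2 * v + 1, t, ht, by linear_combination hx + hy, by linear_combination hx⟩
    · exact ⟨k, v + w, 2 * v, t, ht, by linear_combination hx + hy, by linear_combination hx⟩
  · rintro ⟨k, a, b, t, ht, hd, hx⟩
    rcases Int.even_or_odd' b with ⟨c, rfl | rfl⟩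
    · exact Or.inr ⟨k, t, ht, c, a - c, by linear_combination hx, by linear_combination hd - hx⟩
    · exact Or.inl ⟨k, t, ht, c, a - c, by linear_combination hx, by linear_combination hd - hx⟩

theorem B0_even {d x : ℤ} (h : ChB0 d x) : d ≠ 0 ∧ ∃ m, d = 2 * m := by
  obtain ⟨k, a, b, t, ht, hd, hx⟩ := h
  refine ⟨?_, 2 ^ k * (1 + 2 * a), by linear_combination hd⟩
  rw [hd, show (2 : ℤ) ^ k * 2 + 2 ^ k * 4 * a = 2 ^ k * (2 * (1 + 2 * a)) by ring]
  exact mul_ne_zero (by positivity) (by omega)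

theorem B1_even {d x : ℤ} (h : ChB1 d x) : d ≠ 0 ∧ ∃ m, d = 2 * m := by
  obtain ⟨k, a, b, t, ht, hd, hx⟩ := h
  refine ⟨?_, 2 ^ k * (1 + 2 * a), by linear_combination hd⟩
  rw [hd, show (2 : ℤ) ^ k * 2 + 2 ^ k * 4 * a = 2 ^ k * (2 * (1 + 2 * a)) by ring]
  exact mul_ne_zero (by positivity) (by omega)

theorem two_pow_odd {m : ℤ} (hm : m ≠ 0) : ∃ (k : ℕ) (a : ℤ), m = 2 ^ k * (2 * a + 1) := by
  have hf : FiniteMultiplicity (2 : ℤ) m := Int.finiteMultiplicity_iff.2 ⟨by decide, hm⟩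
  obtain ⟨c, hc, hnd⟩ := hf.exists_eq_pow_mul_and_not_dvd
  refine ⟨multiplicity 2 m, c / 2, hc.trans ?_⟩
  congr 1
  omega

theorem B_total {d x : ℤ} (h0 : d ≠ 0) (h : ∃ m, d = 2 * m) : ChB0 d x ∨ ChB1 d x := by
  obtain ⟨m, rfl⟩ := h
  have hm : m ≠ 0 := by rintro rfl; simp at h0
  obtain ⟨k, a, hmc⟩ := two_pow_odd hm
  have hpos : (0 : ℤ) < 2 ^ k := by positivity
  have hlt := Int.emod_lt_of_pos x hpos
  have hnn := Int.emod_nonneg x hpos.ne'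
  have hdiv := Int.mul_ediv_add_emod x (2 ^ k)
  have hcast : ((x % 2 ^ k).toNat : ℤ) = x % 2 ^ k := Int.toNat_of_nonneg hnn
  have hlt' : (x % 2 ^ k).toNat < 2 ^ k := by zify; rw [hcast]; exact hlt
  rcases Int.even_or_odd' (x / 2 ^ k) with ⟨b, hb | hb⟩
  · left
    exact ⟨k, a, b, _, hlt', by rw [hmc]; ring, by rw [hcast, ← hb]; exact hdiv.symm⟩
  · right
    exact ⟨k, a, b, _, hlt', by rw [hmc]; ring, by rw [hcast, ← hb]; exact hdiv.symm⟩

theorem B_disj_aux : ∀ (k l : ℕ) (a b : ℤ), (2 : ℤ) ^ k * (2 * a + 1) = 2 ^ l * (2 * b + 1) → k = l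
  | 0, 0, _, _, _ => rfl
  | 0, l + 1, a, b, h => by
    rw [pow_succ', mul_assoc] at h
    omega
  | k + 1, 0, a, b, h => by
    rw [pow_succ', mul_assoc] at h
    omega
  | k + 1, l + 1, a, b, h => by
    rw [pow_succ', pow_succ', mul_assoc, mul_assoc] at h
    rw [B_disj_aux k l a b (by omega)]

theorem B_disj {d x : ℤ} (h0 : ChB0 d x) (h1 : ChB1 d x) : False := by
  obtain ⟨k, a, b, t, ht, hd, hx⟩ := h0
  obtain ⟨l, a', b', s, hs, hd', hx'⟩ := h1
  obtain rfl : k = l := B_disj_aux k l a a' (by linarith)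
  have ht' : (t : ℤ) < 2 ^ k := by exact_mod_cast ht
  have hs' : (s : ℤ) < 2 ^ k := by exact_mod_cast hs
  have hpos : (0 : ℤ) < 2 ^ k := by positivity
  have e1 : x / 2 ^ k = 2 * b := by
    rw [hx, Int.mul_add_ediv_left _ _ hpos.ne', Int.ediv_eq_zero_of_lt (by positivity) ht', add_zero]
  have e2 : x / 2 ^ k = 2 * b' + 1 := by
    rw [hx', Int.mul_add_ediv_left _ _ hpos.ne', Int.ediv_eq_zero_of_lt (by positivity) hs', add_zero]
  omega

theorem B0_dbl {d x d' x' : ℤ} (h : ChB0 d x) (hd : d' = 2 * d)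
    (hx : x' = 2 * x ∨ x' = 2 * x + 1) : ChB0 d' x' := by
  obtain ⟨k, a, b, t, ht, h1, h2⟩ := h
  rcases hx with hx | hx
  · exact ⟨k + 1, a, b, 2 * t, by rw [pow_succ]; omega, by rw [hd, h1]; ring,
      by rw [hx, h2]; push_cast; ring⟩
  · exact ⟨k + 1, a, b, 2 * t + 1, by rw [pow_succ]; omega, by rw [hd, h1]; ring,
      by rw [hx, h2]; push_cast; ring⟩

theorem B1_dbl {d x d' x' : ℤ} (h : ChB1 d x) (hd : d' = 2 * d)
    (hx : x' = 2 * x ∨ x' = 2 * x + 1) : ChB1 d' x' := by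
  obtain ⟨k, a, b, t, ht, h1, h2⟩ := h
  rcases hx with hx | hx
  · exact ⟨k + 1, a, b, 2 * t, by rw [pow_succ]; omega, by rw [hd, h1]; ring,
      by rw [hx, h2]; push_cast; ring⟩
  · exact ⟨k + 1, a, b, 2 * t + 1, by rw [pow_succ]; omega, by rw [hd, h1]; ring,
      by rw [hx, h2]; push_cast; ring⟩

theorem B0_base {d x : ℤ} (hd : ∃ m, d = 4 * m + 2) (hx : ∃ m, x = 2 * m) : ChB0 d x := by
  obtain ⟨m, rfl⟩ := hd
  obtain ⟨n, rfl⟩ := hx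
  exact ⟨0, m, n, 0, by simp, by ring, by simp⟩

theorem B1_base {d x : ℤ} (hd : ∃ m, d = 4 * m + 2) (hx : ∃ m, x = 2 * m + 1) : ChB1 d x := by
  obtain ⟨m, rfl⟩ := hd
  obtain ⟨n, rfl⟩ := hx
  exact ⟨0, m, n, 0, by simp, by ring, by simp⟩

theorem U0_even {x y : ℤ} (h : (x, y) ∈ chairU 0) : ∃ m, y - x = 2 * m := by
  rcases (mem_U0 x y).1 h with h | h
  · exact (B0_even h).2
  · exact ⟨0, by omega⟩

theorem U1_even {x y : ℤ} (h : (x, y) ∈ chairU 1) : ∃ m, x + y + 1 = 2 * m := by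
  rcases (mem_U1 x y).1 h with h | h
  · exact (B1_even h).2
  · exact ⟨0, by omega⟩

theorem U2_even {x y : ℤ} (h : (x, y) ∈ chairU 2) : ∃ m, y - x = 2 * m :=
  (B1_even ((mem_U2 x y).1 h)).2

theorem U3_even {x y : ℤ} (h : (x, y) ∈ chairU 3) : ∃ m, x + y + 1 = 2 * m := by
  rcases (mem_U3 x y).1 h with h | h
  · exact (B0_even h).2
  · exact ⟨0, by omega⟩

theorem U_total (x y : ℤ) : (x, y) ∈ chairU 0 ∨ (x, y) ∈ chairU 1 ∨ (x, y) ∈ chairU 2 ∨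
    (x, y) ∈ chairU 3 := by
  rw [mem_U0, mem_U1, mem_U2, mem_U3]
  rcases Int.even_or_odd' (y - x) with ⟨m, hm | hm⟩
  · by_cases h : y = x
    · exact Or.inl (Or.inr h)
    · rcases B_total (d := y - x) (x := x) (by omega) ⟨m, hm⟩ with h | h <;> tauto
  · by_cases h : x + y + 1 = 0
    · rcases lt_or_ge x 0 with h' | h' <;> tauto
    · rcases B_total (d := x + y + 1) (x := x) h ⟨m + x + 1, by omega⟩ with h | h <;> tauto

theorem U_unique {x y : ℤ} {i j : Fin 4} (hi : (x, y) ∈ chairU i) (hj : (x, y) ∈ chairU j) :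
    i = j := by
  have h02 : (x, y) ∈ chairU 0 → (x, y) ∈ chairU 2 → False := by
    rw [mem_U0, mem_U2]
    rintro (h | h) h'
    · exact B_disj h h'
    · exact (B1_even h').1 (by omega)
  have h13 : (x, y) ∈ chairU 1 → (x, y) ∈ chairU 3 → False := by
    rw [mem_U1, mem_U3]
    rintro (h | h) (h' | h')
    · exact B_disj h' h
    · exact (B1_even h).1 h'.1
    · exact (B0_even h').1 h.1
    · omega
  have e0 := U0_even (x := x) (y := y)
  have e1 := U1_even (x := x) (y := y)
  have e2 := U2_even (x := x) (y := y)
  have e3 := U3_even (x := x) (y := y)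
  have hp : ∀ m n : ℤ, y - x = 2 * m → x + y + 1 = 2 * n → False := by intros; omega
  fin_cases i <;> fin_cases j <;> first | rfl | (exfalso; simp at hi hj; grind)

/-- The index of the piece containing `h_m(q)` when `q` lies in piece `j`. -/
def chSig (m j : Fin 4) : Fin 4 := if j = m + 2 then m + 2 else m

theorem U_step (x y : ℤ) (m j : Fin 4) (h : (x, y) ∈ chairU j) :
    chairH m (x, y) ∈ chairU (chSig m j) := by
  have f0 : chairH 0 (x, y) = (2 * x, 2 * y) := by simp [chairH, chairE]
  have f1 : chairH 1 (x, y) = (2 * x + 1, 2 * y) := by simp [chairH, chairE]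
  have f2 : chairH 2 (x, y) = (2 * x + 1, 2 * y + 1) := by simp [chairH, chairE]
  have f3 : chairH 3 (x, y) = (2 * x, 2 * y + 1) := by simp [chairH, chairE]
  fin_cases m <;> fin_cases j <;> simp only [Fin.zero_eta, Fin.mk_one, Fin.reduceFinMk, Fin.isValue] at h ⊢
  · rw [show chSig 0 0 = 0 by decide, f0, mem_U0]
    rw [mem_U0] at h
    rcases h with h | h
    · exact Or.inl (B0_dbl h (by ring) (by simp))
    · exact Or.inr (by omega)
  · rw [show chSig 0 1 = 0 by decide, f0, mem_U0]
    obtain ⟨n, hn⟩ := U1_even h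
    exact Or.inl (B0_base (⟨(2 * y - 2 * x) / 4, by omega⟩) ⟨x, by ring⟩)
  · rw [show chSig 0 2 = 2 by decide, f0, mem_U2]
    rw [mem_U2] at h
    exact B1_dbl h (by ring) (by simp)
  · rw [show chSig 0 3 = 0 by decide, f0, mem_U0]
    obtain ⟨n, hn⟩ := U3_even h
    exact Or.inl (B0_base (⟨(2 * y - 2 * x) / 4, by omega⟩) ⟨x, by ring⟩)
  · rw [show chSig 1 0 = 1 by decide, f1, mem_U1]
    obtain ⟨n, hn⟩ := U0_even h
    exact Or.inl (B1_base (⟨(2 * x + 2 * y) / 4, by omega⟩) ⟨x, by ring⟩)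
  · rw [show chSig 1 1 = 1 by decide, f1, mem_U1]
    rw [mem_U1] at h
    rcases h with h | h
    · exact Or.inl (B1_dbl h (by ring) (by simp))
    · exact Or.inr (by omega)
  · rw [show chSig 1 2 = 1 by decide, f1, mem_U1]
    obtain ⟨n, hn⟩ := U2_even h
    exact Or.inl (B1_base (⟨(2 * x + 2 * y) / 4, by omega⟩) ⟨x, by ring⟩)
  · rw [show chSig 1 3 = 3 by decide, f1, mem_U3]
    rw [mem_U3] at h
    rcases h with h | h
    · exact Or.inl (B0_dbl h (by ring) (by simp))
    · exact Or.inr (by omega)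
  · rw [show chSig 2 0 = 0 by decide, f2, mem_U0]
    rw [mem_U0] at h
    rcases h with h | h
    · exact Or.inl (B0_dbl h (by ring) (by simp))
    · exact Or.inr (by omega)
  · rw [show chSig 2 1 = 2 by decide, f2, mem_U2]
    obtain ⟨n, hn⟩ := U1_even h
    exact (B1_base (⟨(2 * y - 2 * x) / 4, by omega⟩) ⟨x, by ring⟩)
  · rw [show chSig 2 2 = 2 by decide, f2, mem_U2]
    rw [mem_U2] at h
    exact B1_dbl h (by ring) (by simp)
  · rw [show chSig 2 3 = 2 by decide, f2, mem_U2]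
    obtain ⟨n, hn⟩ := U3_even h
    exact (B1_base (⟨(2 * y - 2 * x) / 4, by omega⟩) ⟨x, by ring⟩)
  · rw [show chSig 3 0 = 3 by decide, f3, mem_U3]
    obtain ⟨n, hn⟩ := U0_even h
    exact Or.inl (B0_base (⟨(2 * x + 2 * y) / 4, by omega⟩) ⟨x, by ring⟩)
  · rw [show chSig 3 1 = 1 by decide, f3, mem_U1]
    rw [mem_U1] at h
    rcases h with h | h
    · exact Or.inl (B1_dbl h (by ring) (by simp))
    · exact Or.inr (by omega)
  · rw [show chSig 3 2 = 3 by decide, f3, mem_U3]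
    obtain ⟨n, hn⟩ := U2_even h
    exact Or.inl (B0_base (⟨(2 * x + 2 * y) / 4, by omega⟩) ⟨x, by ring⟩)
  · rw [show chSig 3 3 = 3 by decide, f3, mem_U3]
    rw [mem_U3] at h
    rcases h with h | h
    · exact Or.inl (B0_dbl h (by ring) (by simp))
    · exact Or.inr (by omega)

theorem U_fix (p : ℤ × ℤ) (i : Fin 4) :
    p ∈ chairU i ↔ ∃ m j, chSig m j = i ∧ p ∈ chairH m '' chairU j := by
  constructor
  · intro hp
    have hq : ∃ m q, chairH m q = p := by
      obtain ⟨x, y⟩ := p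
      rcases Int.even_or_odd' x with ⟨a, rfl | rfl⟩ <;>
        rcases Int.even_or_odd' y with ⟨b, rfl | rfl⟩
      · exact ⟨0, (a, b), by simp [chairH, chairE]⟩
      · exact ⟨3, (a, b), by simp [chairH, chairE]⟩
      · exact ⟨1, (a, b), by simp [chairH, chairE]⟩
      · exact ⟨2, (a, b), by simp [chairH, chairE]⟩
    obtain ⟨m, ⟨x, y⟩, rfl⟩ := hq
    have hj : ∃ j, (x, y) ∈ chairU j := by
      rcases U_total x y with h | h | h | h
      exacts [⟨_, h⟩, ⟨_, h⟩, ⟨_, h⟩, ⟨_, h⟩]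
    obtain ⟨j, hj⟩ := hj
    exact ⟨m, j, U_unique (U_step x y m j hj) hp, (x, y), hj, rfl⟩
  · rintro ⟨m, j, rfl, ⟨x, y⟩, hq, rfl⟩
    exact U_step x y m j hq

/-- The chair point sets `U₁, U₂, U₃, U₄ ⊆ ℤ²` are pairwise
disjoint, their union is all of `ℤ²`, and they form a fixed point of the chair matrix
function system `Φ` with rows
`Φ₁ = ({h₁,h₃}, {h₁}, ∅, {h₁})`, `Φ₂ = ({h₂}, {h₂,h₄}, {h₂}, ∅)`,
`Φ₃ = (∅, {h₃}, {h₃,h₁}, {h₃})`, `Φ₄ = ({h₄}, ∅, {h₄}, {h₄,h₂})`: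
that is, `Uᵢ = ⋃ⱼ ⋃_{f ∈ Φᵢⱼ} f(Uⱼ)` for each `i = 1, …, 4`. -/
theorem stmt19 :
    Pairwise (Function.onFun Disjoint chairU) ∧
    (⋃ i, chairU i) = Set.univ ∧
    chairU 0 = chairH 0 '' chairU 0 ∪ chairH 2 '' chairU 0 ∪
      chairH 0 '' chairU 1 ∪ chairH 0 '' chairU 3 ∧
    chairU 1 = chairH 1 '' chairU 0 ∪ chairH 1 '' chairU 1 ∪
      chairH 3 '' chairU 1 ∪ chairH 1 '' chairU 2 ∧
    chairU 2 = chairH 2 '' chairU 1 ∪ chairH 2 '' chairU 2 ∪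
      chairH 0 '' chairU 2 ∪ chairH 2 '' chairU 3 ∧
    chairU 3 = chairH 3 '' chairU 0 ∪ chairH 3 '' chairU 2 ∪
      chairH 3 '' chairU 3 ∪ chairH 1 '' chairU 3 := by
  have fin4 : ∀ P : Fin 4 → Prop, (∃ i, P i) ↔ P 0 ∨ P 1 ∨ P 2 ∨ P 3 := by
    intro P; simp [Fin.exists_fin_succ]
  refine ⟨?_, ?_, ?_, ?_, ?_, ?_⟩
  · intro i j hij
    refine Set.disjoint_left.2 ?_
    rintro ⟨x, y⟩ hi hj
    exact hij (U_unique hi hj)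
  · refine Set.eq_univ_of_forall ?_
    rintro ⟨x, y⟩
    rw [Set.mem_iUnion, fin4]
    exact U_total x y
  · ext p
    rw [U_fix]
    have key : ∀ m j, chSig m j = 0 → (m = 0 ∧ j = 0) ∨ (m = 2 ∧ j = 0) ∨ (m = 0 ∧ j = 1) ∨ (m = 0 ∧ j = 3) := by
      decide
    constructor
    · rintro ⟨m, j, hs, hp⟩
      rcases key m j hs with ⟨rfl, rfl⟩ | ⟨rfl, rfl⟩ | ⟨rfl, rfl⟩ | ⟨rfl, rfl⟩
      · exact Or.inl (Or.inl (Or.inl hp))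
      · exact Or.inl (Or.inl (Or.inr hp))
      · exact Or.inl (Or.inr hp)
      · exact Or.inr hp
    · rintro (((h | h) | h) | h)
      · exact ⟨0, 0, by decide, h⟩
      · exact ⟨2, 0, by decide, h⟩
      · exact ⟨0, 1, by decide, h⟩
      · exact ⟨0, 3, by decide, h⟩
  · ext p
    rw [U_fix]
    have key : ∀ m j, chSig m j = 1 → (m = 1 ∧ j = 0) ∨ (m = 1 ∧ j = 1) ∨ (m = 3 ∧ j = 1) ∨ (m = 1 ∧ j = 2) := by
      decide
    constructor
    · rintro ⟨m, j, hs, hp⟩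
      rcases key m j hs with ⟨rfl, rfl⟩ | ⟨rfl, rfl⟩ | ⟨rfl, rfl⟩ | ⟨rfl, rfl⟩
      · exact Or.inl (Or.inl (Or.inl hp))
      · exact Or.inl (Or.inl (Or.inr hp))
      · exact Or.inl (Or.inr hp)
      · exact Or.inr hp
    · rintro (((h | h) | h) | h)
      · exact ⟨1, 0, by decide, h⟩
      · exact ⟨1, 1, by decide, h⟩
      · exact ⟨3, 1, by decide, h⟩
      · exact ⟨1, 2, by decide, h⟩
  · ext p
    rw [U_fix]
    have key : ∀ m j, chSig m j = 2 → (m = 2 ∧ j = 1) ∨ (m = 2 ∧ j = 2) ∨ (m = 0 ∧ j = 2) ∨ (m = 2 ∧ j = 3) := by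
      decide
    constructor
    · rintro ⟨m, j, hs, hp⟩
      rcases key m j hs with ⟨rfl, rfl⟩ | ⟨rfl, rfl⟩ | ⟨rfl, rfl⟩ | ⟨rfl, rfl⟩
      · exact Or.inl (Or.inl (Or.inl hp))
      · exact Or.inl (Or.inl (Or.inr hp))
      · exact Or.inl (Or.inr hp)
      · exact Or.inr hp
    · rintro (((h | h) | h) | h)
      · exact ⟨2, 1, by decide, h⟩
      · exact ⟨2, 2, by decide, h⟩
      · exact ⟨0, 2, by decide, h⟩
      · exact ⟨2, 3, by decide, h⟩
  · ext p
    rw [U_fix]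
    have key : ∀ m j, chSig m j = 3 → (m = 3 ∧ j = 0) ∨ (m = 3 ∧ j = 2) ∨ (m = 3 ∧ j = 3) ∨ (m = 1 ∧ j = 3) := by
      decide
    constructor
    · rintro ⟨m, j, hs, hp⟩
      rcases key m j hs with ⟨rfl, rfl⟩ | ⟨rfl, rfl⟩ | ⟨rfl, rfl⟩ | ⟨rfl, rfl⟩
      · exact Or.inl (Or.inl (Or.inl hp))
      · exact Or.inl (Or.inl (Or.inr hp))
      · exact Or.inl (Or.inr hp)
      · exact Or.inr hp
    · rintro (((h | h) | h) | h)
      · exact ⟨3, 0, by decide, h⟩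
      · exact ⟨3, 2, by decide, h⟩
      · exact ⟨3, 3, by decide, h⟩
      · exact ⟨1, 3, by decide, h⟩
end
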